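/- Let α_x ≥ 0, α_p > 0, σ_μ ≥ 0, γ > 0, σ_ε > 0, set α_z = α_x²/(γ²·σ_ε²), α = α_x + α_p + α_z and α_ψ = α²/(α_x + α_p²·σ_μ²). If √(α_x/(α_p + α_z)² + σ_μ²/(1 + α_z/α_p)²) ≥ 1/√(2π), then for every Z ∈ ℝ, x_c ∈ ℝ and m ∈ ℝ the equation Φ(√α_ψ·(((α_z + α_p)/α)·θ − (α_z/α)·Z − (α_p/α)·m − x_c/√α)) = θ has exactly one real solution θ*, and θ* ∈ (0,1). -/

import Mathlib

/-- The standard normal cumulative distribution function. -/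
noncomputable def stdNormalCDF (x : ℝ) : ℝ :=
  ∫ t in Set.Iic x, (Real.sqrt (2 * Real.pi))⁻¹ * Real.exp (-t ^ 2 / 2)

open MeasureTheory in
theorem aux_int : Integrable (fun t : ℝ => (Real.sqrt (2 * Real.pi))⁻¹ * Real.exp (-t ^ 2 / 2)) := by
  have h := (integrable_exp_neg_mul_sq (b := 1/2) (by norm_num)).const_mul (Real.sqrt (2 * Real.pi))⁻¹
  refine h.congr (Filter.Eventually.of_forall fun t => ?_)
  simp only
  congr 2
  ring

open MeasureTheory in
theorem aux_total : ∫ t : ℝ, (Real.sqrt (2 * Real.pi))⁻¹ * Real.exp (-t ^ 2 / 2) = 1 := by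
  rw [integral_const_mul]
  have h := integral_gaussian (1/2)
  have e : (fun t : ℝ => Real.exp (-t ^ 2 / 2)) = fun t : ℝ => Real.exp (-(1/2) * t ^ 2) := by
    funext t
    congr 1
    ring
  rw [e, h]
  have : Real.pi / (1/2) = 2 * Real.pi := by ring
  rw [this]
  have hp : 0 < Real.sqrt (2 * Real.pi) := Real.sqrt_pos.2 (by positivity)
  exact inv_mul_cancel₀ hp.ne'

theorem aux_dpos (t : ℝ) : 0 < (Real.sqrt (2 * Real.pi))⁻¹ * Real.exp (-t ^ 2 / 2) := by
  have hp : 0 < Real.sqrt (2 * Real.pi) := Real.sqrt_pos.2 (by positivity)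
  positivity

open MeasureTheory in
theorem aux_setpos (s : Set ℝ) (hm : MeasurableSet s) (hs : volume s ≠ 0) :
    0 < ∫ t in s, (Real.sqrt (2 * Real.pi))⁻¹ * Real.exp (-t ^ 2 / 2) := by
  rw [setIntegral_pos_iff_support_of_nonneg_ae
    (Filter.Eventually.of_forall fun t => (aux_dpos t).le) aux_int.integrableOn]
  have : Function.support (fun t : ℝ => (Real.sqrt (2 * Real.pi))⁻¹ * Real.exp (-t ^ 2 / 2))
      = Set.univ := by
    ext t
    simpa only [Function.mem_support, Set.mem_univ, iff_true] using (aux_dpos t).ne'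
  rw [this, Set.univ_inter]
  exact pos_iff_ne_zero.2 hs

theorem aux_pos (x : ℝ) : 0 < stdNormalCDF x :=
  aux_setpos _ measurableSet_Iic (by simp)

open MeasureTheory in
theorem aux_lt (x : ℝ) : stdNormalCDF x < 1 := by
  have h := aux_setpos (Set.Ioi x) measurableSet_Ioi (by simp)
  have h2 := integral_add_compl (μ := volume) (s := Set.Iic x) measurableSet_Iic aux_int
  rw [aux_total, Set.compl_Iic] at h2
  unfold stdNormalCDF
  linarith

theorem aux_sub (x y : ℝ) : stdNormalCDF y - stdNormalCDF x =
    ∫ t in x..y, (Real.sqrt (2 * Real.pi))⁻¹ * Real.exp (-t ^ 2 / 2) :=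
  intervalIntegral.integral_Iic_sub_Iic aux_int.integrableOn aux_int.integrableOn

theorem aux_mono {x y : ℝ} (h : x ≤ y) : stdNormalCDF x ≤ stdNormalCDF y := by
  have := intervalIntegral.integral_nonneg (μ := MeasureTheory.volume) h
    (fun t _ => (aux_dpos t).le)
  rw [← aux_sub] at this
  linarith

theorem aux_lip {x y : ℝ} (h : x < y) :
    stdNormalCDF y - stdNormalCDF x < (Real.sqrt (2 * Real.pi))⁻¹ * (y - x) := by
  have hp : 0 < (Real.sqrt (2 * Real.pi))⁻¹ := inv_pos.2 (Real.sqrt_pos.2 (by positivity))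
  have key := intervalIntegral.integral_lt_integral_of_continuousOn_of_le_of_exists_lt
    (f := fun t : ℝ => (Real.sqrt (2 * Real.pi))⁻¹ * Real.exp (-t ^ 2 / 2))
    (g := fun _ => (Real.sqrt (2 * Real.pi))⁻¹) h (by fun_prop) (by fun_prop)
    (fun t _ => by
      have : Real.exp (-t ^ 2 / 2) ≤ 1 := Real.exp_le_one_iff.2 (by nlinarith [sq_nonneg t])
      nlinarith)
    (by
      have : ∃ c ∈ Set.Icc x y, c ≠ 0 := by
        by_cases hx : x = 0
        · exact ⟨y, ⟨h.le, le_rfl⟩, by rw [← hx]; exact h.ne'⟩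
        · exact ⟨x, ⟨le_rfl, h.le⟩, hx⟩
      obtain ⟨c, hc, h0⟩ := this
      refine ⟨c, hc, ?_⟩
      have : Real.exp (-c ^ 2 / 2) < 1 := Real.exp_lt_one_iff.2 (by
        have : 0 < c ^ 2 := by positivity
        linarith)
      nlinarith)
  rw [← aux_sub, intervalIntegral.integral_const, smul_eq_mul] at key
  linarith

theorem aux_cont : Continuous stdNormalCDF := by
  have e : stdNormalCDF = fun x => stdNormalCDF 0 +
      ∫ t in (0:ℝ)..x, (Real.sqrt (2 * Real.pi))⁻¹ * Real.exp (-t ^ 2 / 2) := by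
    funext x
    rw [← aux_sub]
    ring
  rw [e]
  exact continuous_const.add (intervalIntegral.continuous_primitive
    (fun a b => aux_int.intervalIntegrable) 0)

theorem aux_main (s b : ℝ) (hs : 0 < s) (hs2 : s ≤ Real.sqrt (2 * Real.pi)) :
    ∃ θ ∈ Set.Ioo (0 : ℝ) 1, stdNormalCDF (s * θ - b) = θ ∧
      ∀ θ' : ℝ, stdNormalCDF (s * θ' - b) = θ' → θ' = θ := by
  have hc : Continuous fun θ : ℝ => θ - stdNormalCDF (s * θ - b) :=
    continuous_id.sub (aux_cont.comp (by fun_prop))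
  have hp : 0 < Real.sqrt (2 * Real.pi) := Real.sqrt_pos.2 (by positivity)
  have key : ∀ a c : ℝ, a < c → stdNormalCDF (s * a - b) = a → stdNormalCDF (s * c - b) = c →
      False := by
    intro a c hac ha hc
    have h1 := aux_lip (x := s * a - b) (y := s * c - b) (by nlinarith)
    rw [ha, hc] at h1
    have h2 : (Real.sqrt (2 * Real.pi))⁻¹ * s ≤ 1 := by
      rw [inv_mul_le_iff₀ hp]
      linarith
    nlinarith
  obtain ⟨θ, -, hθ⟩ := intermediate_value_Icc (zero_le_one' ℝ) hc.continuousOn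
    (show (0:ℝ) ∈ Set.Icc _ _ from
      ⟨by have := aux_pos (s * 0 - b); linarith,
       by have := aux_lt (s * 1 - b); linarith⟩)
  have hθ' : stdNormalCDF (s * θ - b) = θ := by
    simp only at hθ
    linarith
  refine ⟨θ, ⟨?_, ?_⟩, hθ', ?_⟩
  · rw [← hθ']; exact aux_pos _
  · rw [← hθ']; exact aux_lt _
  · intro θ2 h2
    rcases lt_trichotomy θ2 θ with h | h | h
    · exact (key _ _ h h2 hθ').elim
    · exact h
    · exact (key _ _ h hθ' h2).elim

theorem stmt_8 (αx αp σμ γ σε : ℝ) (hαx : 0 ≤ αx) (hαp : 0 < αp) (hσμ : 0 ≤ σμ)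
    (hγ : 0 < γ) (hσε : 0 < σε)
    (αz α αψ : ℝ) (hαz : αz = αx ^ 2 / (γ ^ 2 * σε ^ 2)) (hα : α = αx + αp + αz)
    (hαψ : αψ = α ^ 2 / (αx + αp ^ 2 * σμ ^ 2))
    (h : Real.sqrt (αx / (αp + αz) ^ 2 + σμ ^ 2 / (1 + αz / αp) ^ 2) ≥
      1 / Real.sqrt (2 * Real.pi)) :
    ∀ Z xc m : ℝ,
      ∃ θ ∈ Set.Ioo (0 : ℝ) 1,
        stdNormalCDF (Real.sqrt αψ *
          (((αz + αp) / α) * θ - (αz / α) * Z - (αp / α) * m - xc / Real.sqrt α)) = θ ∧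
        ∀ θ' : ℝ,
          stdNormalCDF (Real.sqrt αψ *
            (((αz + αp) / α) * θ' - (αz / α) * Z - (αp / α) * m - xc / Real.sqrt α)) = θ' →
          θ' = θ := by
  have hz : 0 ≤ αz := by rw [hαz]; positivity
  have hαpos : 0 < α := by rw [hα]; positivity
  have hp : 0 < Real.sqrt (2 * Real.pi) := Real.sqrt_pos.2 (by positivity)
  have hq : 0 < αz + αp := by positivity
  have hD0 : 0 ≤ αx + αp ^ 2 * σμ ^ 2 := by positivity
  have e1 : αx / (αp + αz) ^ 2 + σμ ^ 2 / (1 + αz / αp) ^ 2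
      = (αx + αp ^ 2 * σμ ^ 2) / (αz + αp) ^ 2 := by
    have : 1 + αz / αp = (αz + αp) / αp := by field_simp; ring
    rw [this, add_comm αp αz]
    field_simp
  rw [e1, Real.sqrt_div hD0, Real.sqrt_sq hq.le] at h
  set r := Real.sqrt (αx + αp ^ 2 * σμ ^ 2) with hr
  have hrpos : 0 < r := by
    have h1 : 0 < r / (αz + αp) := lt_of_lt_of_le (by positivity) h
    by_contra hn
    have h2 : r / (αz + αp) ≤ 0 := div_nonpos_of_nonpos_of_nonneg (not_lt.1 hn) hq.le
    linarith
  have e2 : Real.sqrt αψ = α / r := by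
    rw [hαψ, Real.sqrt_div (sq_nonneg _), Real.sqrt_sq hαpos.le]
  have hs : 0 < (αz + αp) / r := by positivity
  have hs2 : (αz + αp) / r ≤ Real.sqrt (2 * Real.pi) := by
    rw [ge_iff_le, div_le_div_iff₀ hp hq] at h
    rw [div_le_iff₀ hrpos]
    linarith
  intro Z xc m
  have e3 : ∀ θ : ℝ, Real.sqrt αψ *
      (((αz + αp) / α) * θ - (αz / α) * Z - (αp / α) * m - xc / Real.sqrt α)
      = (αz + αp) / r * θ - Real.sqrt αψ * ((αz / α) * Z + (αp / α) * m + xc / Real.sqrt α) := by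
    intro θ
    have : (αz + αp) / r = Real.sqrt αψ * ((αz + αp) / α) := by
      rw [e2]
      field_simp
    rw [this]
    ring
  simp only [e3]
  exact aux_main _ _ hs hs2
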